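/- arXiv:math/0611560 — 2 statements merged into one kernel-verified Lean document; each statement's English description precedes it below -/
import Mathlib

section
/- Let V be a finite-dimensional vector space over 𝔽₂ equipped with a nondegenerate quadratic form q, let D and D' be (possibly degenerate) linear subspaces of V, and let f̲ : D → D' be a linear isomorphism satisfying q(f̲(d)) = q(d) for all d ∈ D. Then there exists a linear isometry f : V → V (a linear automorphism of V with q(f(v)) = q(v) for all v ∈ V) such that f(d) = f̲(d) for all d ∈ D. -/
open scoped Classical in
/-- The nontrivial additive character of `𝔽₂`. -/
noncomputable def wittChi (a : ZMod 2) : ℤ := if a = 0 then 1 else -1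

theorem wittChi_add (a b : ZMod 2) : wittChi (a + b) = wittChi a * wittChi b := by
  unfold wittChi
  revert a b
  decide

theorem wittChi_zero : wittChi 0 = 1 := by simp [wittChi]

theorem zmod2_cases (a : ZMod 2) : a = 0 ∨ a = 1 := by
  revert a; decide

theorem wittChi_ind (a b : ZMod 2) : 1 + wittChi (a + b) = if a = b then 2 else 0 := by
  unfold wittChi
  revert a b
  decide

open scoped Classical in
theorem wittChi_sum {W : Type*} [AddCommGroup W] [Module (ZMod 2) W] [Fintype W]
    (L : W →ₗ[ZMod 2] ZMod 2) :
    ∑ w, wittChi (L w) = if (∀ w, L w = 0) then (Fintype.card W : ℤ) else 0 := by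
  split_ifs with h
  · simp [h, wittChi_zero]
  · push Not at h
    obtain ⟨w₀, h₀⟩ := h
    have h1 : L w₀ = 1 := (zmod2_cases _).resolve_left h₀
    have h2 : ∑ w, wittChi (L (w + w₀)) = ∑ w, wittChi (L w) :=
      Equiv.sum_comp (Equiv.addRight w₀) (fun w => wittChi (L w))
    have h3 : ∑ w, wittChi (L (w + w₀)) = - ∑ w, wittChi (L w) := by
      rw [← Finset.sum_neg_distrib]
      refine Finset.sum_congr rfl fun w _ => ?_
      rw [map_add, wittChi_add, h1]
      simp [wittChi]
    linarith

open scoped Classical in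
/-- Gauss sum computation of the number of vectors with prescribed value of `q` and prescribed
pairings with the image of `i`. -/
theorem witt_count {V W : Type*} [AddCommGroup V] [Module (ZMod 2) V] [Fintype V]
    [AddCommGroup W] [Module (ZMod 2) W] [Fintype W]
    (q : QuadraticForm (ZMod 2) V)
    (hq : ∀ v : V, (∀ w : V, QuadraticMap.polar q v w = 0) → v = 0)
    (i : W →ₗ[ZMod 2] V) (hi : Function.Injective i) (φ : W →ₗ[ZMod 2] ZMod 2) (a : ZMod 2) :
    2 * (Fintype.card W : ℤ) *
      ((Finset.univ.filter fun v : V => q v = a ∧ ∀ w, QuadraticMap.polar q v (i w) = φ w).card : ℤ)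
    = ∑ w, wittChi (φ w) * ((if w = 0 then (Fintype.card V : ℤ) else 0)
        + wittChi a * (wittChi (q (i w)) * ∑ v, wittChi (q v))) := by
  have e1 : ∀ v : V, (1 + wittChi (q v + a)) *
      ∑ w, wittChi (QuadraticMap.polar q v (i w) + φ w) =
      if q v = a ∧ ∀ w, QuadraticMap.polar q v (i w) = φ w then
        2 * (Fintype.card W : ℤ) else 0 := by
    intro v
    have := wittChi_sum ((q.polarBilin v).comp i + φ)
    simp only [LinearMap.add_apply, LinearMap.comp_apply, QuadraticMap.polarBilin_apply_apply,
      CharTwo.add_eq_zero] at this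
    rw [this, wittChi_ind]
    by_cases h1 : q v = a <;> by_cases h2 : ∀ w, QuadraticMap.polar q v (i w) = φ w <;>
      simp [h1, h2]
  have e2 : 2 * (Fintype.card W : ℤ) *
      ((Finset.univ.filter fun v : V =>
        q v = a ∧ ∀ w, QuadraticMap.polar q v (i w) = φ w).card : ℤ) =
      ∑ v, (1 + wittChi (q v + a)) * ∑ w, wittChi (QuadraticMap.polar q v (i w) + φ w) := by
    rw [Finset.sum_congr rfl fun v _ => e1 v, ← Finset.sum_filter, Finset.sum_const, nsmul_eq_mul,
      mul_comm]
  rw [e2]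
  simp only [Finset.mul_sum]
  rw [Finset.sum_comm]
  refine Finset.sum_congr rfl fun w _ => ?_
  have e3 : ∑ v, wittChi (QuadraticMap.polar q v (i w)) =
      if w = 0 then (Fintype.card V : ℤ) else 0 := by
    have := wittChi_sum (q.polarBilin (i w))
    simp only [QuadraticMap.polarBilin_apply_apply] at this
    simp only [QuadraticMap.polar_comm q _ (i w)]
    rw [this]
    refine if_congr ⟨fun h => ?_, fun h => ?_⟩ rfl rfl
    · exact hi (by rw [hq _ h, map_zero])
    · intro v; simp [h]
  have e4 : wittChi (q (i w)) * ∑ v, wittChi (q v) =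
      ∑ v, wittChi (q v) * wittChi (QuadraticMap.polar q v (i w)) := by
    rw [← Equiv.sum_comp (Equiv.addRight (i w)) (fun v => wittChi (q v)), Finset.mul_sum]
    refine Finset.sum_congr rfl fun v _ => ?_
    simp only [Equiv.coe_addRight]
    rw [QuadraticMap.map_add q v (i w), wittChi_add, wittChi_add]
    have : wittChi (q (i w)) * wittChi (q (i w)) = 1 := by
      rw [← wittChi_add, CharTwo.add_self_eq_zero, wittChi_zero]
    linear_combination (wittChi (q v) * wittChi (QuadraticMap.polar q v (i w))) * this
  rw [← Finset.mul_sum, ← Finset.mul_sum, e4, ← e3, Finset.mul_sum, ← Finset.sum_add_distrib, Finset.mul_sum]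
  refine Finset.sum_congr rfl fun v _ => ?_
  rw [wittChi_add, wittChi_add]
  ring

theorem witt_polar_eq {V W : Type*} [AddCommGroup V] [Module (ZMod 2) V]
    [AddCommGroup W] [Module (ZMod 2) W]
    (q : QuadraticForm (ZMod 2) V) (i j : W →ₗ[ZMod 2] V) (hij : ∀ w, q (i w) = q (j w))
    (w w' : W) : QuadraticMap.polar q (i w) (i w') = QuadraticMap.polar q (j w) (j w') := by
  simp only [QuadraticMap.polar, ← map_add, hij]

open scoped Classical in
/-- One-step extension. -/
theorem witt_step {V W : Type*} [AddCommGroup V] [Module (ZMod 2) V] [Fintype V]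
    [AddCommGroup W] [Module (ZMod 2) W] [Fintype W]
    (q : QuadraticForm (ZMod 2) V)
    (hq : ∀ v : V, (∀ w : V, QuadraticMap.polar q v w = 0) → v = 0)
    (i j : W →ₗ[ZMod 2] V) (hi : Function.Injective i) (hj : Function.Injective j)
    (hij : ∀ w, q (i w) = q (j w)) (x : V) (hx : ∀ w, i w ≠ x) :
    ∃ y, (∀ w, j w ≠ y) ∧ q y = q x ∧
      ∀ w, QuadraticMap.polar q y (j w) = QuadraticMap.polar q x (i w) := by
  let φ : W →ₗ[ZMod 2] ZMod 2 := (q.polarBilin x).comp i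
  have hφ : ∀ w, φ w = QuadraticMap.polar q x (i w) := fun w => rfl
  let A : (W →ₗ[ZMod 2] V) → Finset V := fun k =>
    Finset.univ.filter fun v : V => q v = q x ∧ ∀ w, QuadraticMap.polar q v (k w) = φ w
  have hA : (A i).card = (A j).card := by
    have h1 := witt_count q hq i hi φ (q x)
    have h2 := witt_count q hq j hj φ (q x)
    simp only [hij] at h1
    rw [← h2] at h1
    have h0 : (2 * (Fintype.card W : ℤ)) ≠ 0 := by
      have : Fintype.card W ≠ 0 := Fintype.card_ne_zero
      positivity
    exact_mod_cast mul_left_cancel₀ h0 h1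
  by_contra! hcon
  -- every element of `A j` lies in the range of `j`
  have hsub : (A j).card ≤ ((A i).erase x).card := by
    have hr : ∀ y ∈ A j, ∃ w, j w = y := by
      intro y hy
      simp only [A, Finset.mem_filter, Finset.mem_univ, true_and] at hy
      by_contra! hne
      obtain ⟨w, hw⟩ := hcon y hne hy.1
      exact hw (hy.2 w)
    choose! s hs using hr
    refine Finset.card_le_card_of_injOn (fun y => i (s y)) ?_ ?_
    · intro y hy
      have hsy := hs y hy
      simp only [A, Finset.coe_filter, Finset.mem_univ, true_and, Set.mem_ofPred_eq] at hy
      simp only [Finset.coe_erase, Set.mem_sdiff, Set.mem_singleton_iff, A, Finset.coe_filter,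
        Finset.mem_univ, true_and, Set.mem_ofPred_eq]
      refine ⟨⟨?_, fun w => ?_⟩, hx _⟩
      · rw [hij, hsy, hy.1]
      · rw [witt_polar_eq q i j hij, hsy, hy.2]
    · intro y hy y' hy' h
      rw [← hs y hy, ← hs y' hy', hi h]
  have hxA : x ∈ A i := by simp [A, hφ]
  have := Finset.card_erase_lt_of_mem hxA
  omega

theorem witt_coprod_inj {V W : Type*} [AddCommGroup V] [Module (ZMod 2) V]
    [AddCommGroup W] [Module (ZMod 2) W] (i : W →ₗ[ZMod 2] V) (hi : Function.Injective i)
    (x : V) (hx : ∀ w, i w ≠ x) :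
    Function.Injective (i.coprod (LinearMap.toSpanSingleton (ZMod 2) V x)) := by
  rw [injective_iff_map_eq_zero]
  rintro ⟨w, c⟩ h
  simp only [LinearMap.coprod_apply, LinearMap.toSpanSingleton_apply] at h
  rcases zmod2_cases c with rfl | rfl
  · rw [zero_smul, add_zero] at h
    rw [(injective_iff_map_eq_zero i).1 hi w h]; rfl
  · rw [one_smul] at h
    exact absurd (by rw [map_neg, neg_eq_of_add_eq_zero_right h]) (hx (-w))

theorem witt_aux.{u} {V : Type u} [AddCommGroup V] [Module (ZMod 2) V]
    [FiniteDimensional (ZMod 2) V]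
    (q : QuadraticForm (ZMod 2) V)
    (hq : ∀ v : V, (∀ w : V, QuadraticMap.polar q v w = 0) → v = 0) (n : ℕ) :
    ∀ (W : Type u) [AddCommGroup W] [Module (ZMod 2) W] [FiniteDimensional (ZMod 2) W]
    (i j : W →ₗ[ZMod 2] V) (_ : Function.Injective i) (_ : Function.Injective j)
    (_ : ∀ w, q (i w) = q (j w))
    (_ : Module.finrank (ZMod 2) V = Module.finrank (ZMod 2) W + n),
    ∃ g : V ≃ₗ[ZMod 2] V, (∀ v : V, q (g v) = q v) ∧ ∀ w, g (i w) = j w := by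
  induction n with
  | zero =>
    intro W _ _ _ i j hi hj hij hn
    let I := LinearEquiv.ofInjectiveOfFinrankEq i hi hn.symm
    let J := LinearEquiv.ofInjectiveOfFinrankEq j hj hn.symm
    have hI : ∀ w, I w = i w := fun w => rfl
    have hJ : ∀ w, J w = j w := fun w => rfl
    refine ⟨I.symm.trans J, fun v => ?_, fun w => ?_⟩
    · obtain ⟨w, rfl⟩ := I.surjective v
      rw [LinearEquiv.trans_apply, LinearEquiv.symm_apply_apply, hI, hJ, hij]
    · rw [← hI]; simp [hJ]
  | succ n ih =>
    intro W _ _ _ i j hi hj hij hn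
    have : Finite V := Module.finite_of_finite (ZMod 2)
    have : Finite W := Module.finite_of_finite (ZMod 2)
    have := Fintype.ofFinite V
    have := Fintype.ofFinite W
    obtain ⟨x, hx⟩ : ∃ x, ∀ w, i w ≠ x := by
      by_contra! h
      have := LinearMap.finrank_le_finrank_of_surjective (f := i) h
      omega
    obtain ⟨y, hy, hqy, hp⟩ := witt_step q hq i j hi hj hij x hx
    obtain ⟨g, hg, hgi⟩ := ih (W × ZMod 2)
      (i.coprod (LinearMap.toSpanSingleton (ZMod 2) V x))
      (j.coprod (LinearMap.toSpanSingleton (ZMod 2) V y))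
      (witt_coprod_inj i hi x hx) (witt_coprod_inj j hj y hy) (by
        rintro ⟨w, c⟩
        simp only [LinearMap.coprod_apply, LinearMap.toSpanSingleton_apply]
        rcases zmod2_cases c with rfl | rfl
        · simp [hij]
        · rw [one_smul, one_smul, QuadraticMap.map_add q, QuadraticMap.map_add q, hij, hqy,
            QuadraticMap.polar_comm q _ x, QuadraticMap.polar_comm q _ y, hp])
      (by rw [Module.finrank_prod, Module.finrank_self]; omega)
    refine ⟨g, hg, fun w => ?_⟩
    simpa using hgi (w, 0)


/-- **Witt's theorem for degenerate subforms over 𝔽₂** (Theorem 1.3 of the paper).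
If `q` is a nondegenerate quadratic form on a finite-dimensional `𝔽₂`-vector space `V`,
`D` and `D'` are (possibly degenerate) subspaces and `f̲ : D ≃ D'` is a linear isomorphism
preserving `q`, then `f̲` extends to a linear isometry of `V`. -/
theorem witt_extension_degenerate_subforms
    (V : Type*) [AddCommGroup V] [Module (ZMod 2) V] [FiniteDimensional (ZMod 2) V]
    (q : QuadraticForm (ZMod 2) V)
    (hq : ∀ v : V, (∀ w : V, QuadraticMap.polar q v w = 0) → v = 0)
    (D D' : Submodule (ZMod 2) V) (f : D ≃ₗ[ZMod 2] D')
    (hf : ∀ d : D, q ((f d : V)) = q (d : V)) :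
    ∃ g : V ≃ₗ[ZMod 2] V, (∀ v : V, q (g v) = q v) ∧ ∀ d : D, g (d : V) = (f d : V) := by
  have hn : Module.finrank (ZMod 2) D ≤ Module.finrank (ZMod 2) V := D.finrank_le
  obtain ⟨g, hg, h⟩ := witt_aux q hq _ D D.subtype (D'.subtype.comp f.toLinearMap)
    D.injective_subtype (D'.injective_subtype.comp f.injective) (fun d => (hf d).symm)
    (Nat.add_sub_cancel' hn).symm
  exact ⟨g, hg, h⟩
end

section
/- Let V be a finite-dimensional vector space over 𝔽₂, let φ : V → 𝔽₂ be a linear form, and let u ∈ V with φ(u) = 0. Suppose there exists w ∈ V with φ(w) = 1. Let ι_φ denote the left contraction by φ on the exterior algebra ⋀V (the unique φ-antiderivation with ι_φ(ι(x)) = φ(x) for x ∈ V). Then for every z ∈ ⋀V such that ι_φ(z ∧ ι(u)) = 0, there exists z' in the image of the algebra map ⋀(ker φ) → ⋀V induced by the inclusion ker φ ⊆ V such that z' ∧ ι(u) = z ∧ ι(u). -/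
theorem contractLeft_map_ker_aux
    (V : Type*) [AddCommGroup V] [Module (ZMod 2) V]
    (φ : V →ₗ[ZMod 2] ZMod 2) (y : ExteriorAlgebra (ZMod 2) (LinearMap.ker φ)) :
    CliffordAlgebra.contractLeft (Q := (0 : QuadraticForm (ZMod 2) V)) φ
      (ExteriorAlgebra.map (LinearMap.ker φ).subtype y) = 0 := by
  induction y using CliffordAlgebra.left_induction with
  | algebraMap r =>
    rw [AlgHom.commutes]
    exact CliffordAlgebra.contractLeft_algebraMap _ φ r
  | add x y hx hy => rw [map_add, map_add, hx, hy, add_zero]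
  | ι_mul x m hx =>
    have h1 : ExteriorAlgebra.map (LinearMap.ker φ).subtype (CliffordAlgebra.ι 0 m)
        = CliffordAlgebra.ι 0 (m : V) := ExteriorAlgebra.map_apply_ι _ _
    have h2 : φ (m : V) = 0 := m.2
    rw [map_mul, h1, CliffordAlgebra.contractLeft_ι_mul, hx, h2, zero_smul, mul_zero, sub_zero]

theorem exists_decomp_aux
    (V : Type*) [AddCommGroup V] [Module (ZMod 2) V]
    (φ : V →ₗ[ZMod 2] ZMod 2) (w : V) (hw : φ w = 1) (z : ExteriorAlgebra (ZMod 2) V) :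
    ∃ a b : ExteriorAlgebra (ZMod 2) (LinearMap.ker φ),
      z = ExteriorAlgebra.map (LinearMap.ker φ).subtype a +
        ExteriorAlgebra.ι (ZMod 2) w * ExteriorAlgebra.map (LinearMap.ker φ).subtype b := by
  induction z using CliffordAlgebra.left_induction with
  | algebraMap r =>
    refine ⟨algebraMap _ _ r, 0, ?_⟩
    rw [AlgHom.commutes, map_zero, mul_zero, add_zero]
  | add x y hx hy =>
    obtain ⟨a, b, rfl⟩ := hx
    obtain ⟨c, d, rfl⟩ := hy
    refine ⟨a + c, b + d, ?_⟩
    rw [map_add, map_add, mul_add]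
    abel
  | ι_mul x m hx =>
    obtain ⟨a, b, rfl⟩ := hx
    have hk : m - φ m • w ∈ LinearMap.ker φ := by simp [hw]
    obtain ⟨k, hk'⟩ : ∃ k : LinearMap.ker φ, (k : V) = m - φ m • w := ⟨⟨_, hk⟩, rfl⟩
    have hm : m = (k : V) + φ m • w := by rw [hk']; abel
    generalize φ m = c at hm
    refine ⟨ExteriorAlgebra.ι _ k * a, c • a - ExteriorAlgebra.ι _ k * b, ?_⟩
    have e : CliffordAlgebra.ι 0 m = ExteriorAlgebra.ι (ZMod 2) (k : V)
        + c • ExteriorAlgebra.ι (ZMod 2) w := by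
      rw [← map_smul, ← map_add, ← hm]
    have s : ExteriorAlgebra.ι (ZMod 2) (k : V) * ExteriorAlgebra.ι (ZMod 2) w
        = - (ExteriorAlgebra.ι (ZMod 2) w * ExteriorAlgebra.ι (ZMod 2) (k : V)) :=
      eq_neg_of_add_eq_zero_left (ExteriorAlgebra.ι_add_mul_swap _ _)
    rw [e, map_sub, map_smul, map_mul, map_mul, ExteriorAlgebra.map_apply_ι,
      Submodule.subtype_apply, add_mul, mul_add, mul_add, ← mul_assoc _ _ (ExteriorAlgebra.map _ b),
      s, smul_mul_assoc, smul_mul_assoc, ← mul_assoc _ _ (ExteriorAlgebra.map _ b),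
      ExteriorAlgebra.ι_sq_zero, zero_mul, smul_zero, mul_sub, mul_smul_comm, neg_mul, mul_assoc]
    abel


/-- Lemma 6.11 of the paper (exterior-algebra content): if `φ u = 0` and `φ` is surjective
(witnessed by `w` with `φ w = 1`), then any `z` with `ι_φ (z ∧ ι u) = 0` can be replaced,
up to multiplication by `ι u`, by an element coming from `⋀(ker φ)`. -/
theorem exists_mem_range_map_ker_of_contractLeft_eq_zero
    (V : Type*) [AddCommGroup V] [Module (ZMod 2) V] [FiniteDimensional (ZMod 2) V]
    (φ : V →ₗ[ZMod 2] ZMod 2) (u : V) (hu : φ u = 0) (hw : ∃ w : V, φ w = 1) :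
    ∀ z : ExteriorAlgebra (ZMod 2) V,
      CliffordAlgebra.contractLeft φ (z * ExteriorAlgebra.ι (ZMod 2) u) = 0 →
      ∃ z' ∈ (ExteriorAlgebra.map (LinearMap.ker φ).subtype).range,
        z' * ExteriorAlgebra.ι (ZMod 2) u = z * ExteriorAlgebra.ι (ZMod 2) u := by
  obtain ⟨w, hw⟩ := hw
  intro z hz
  obtain ⟨a, b, rfl⟩ := exists_decomp_aux V φ w hw z
  have hu' : ExteriorAlgebra.ι (ZMod 2) u = ExteriorAlgebra.map (LinearMap.ker φ).subtype
      (ExteriorAlgebra.ι (ZMod 2) ⟨u, hu⟩) := by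
    rw [ExteriorAlgebra.map_apply_ι]; rfl
  refine ⟨_, ⟨a, rfl⟩, ?_⟩
  have hb : ExteriorAlgebra.map (LinearMap.ker φ).subtype b * ExteriorAlgebra.ι (ZMod 2) u = 0 := by
    rw [add_mul, mul_assoc, hu', ← map_mul, ← map_mul, map_add, contractLeft_map_ker_aux, zero_add]
      at hz
    have h := CliffordAlgebra.contractLeft_ι_mul (Q := (0 : QuadraticForm (ZMod 2) V)) (d := φ) w
      (ExteriorAlgebra.map (LinearMap.ker φ).subtype (b * ExteriorAlgebra.ι (ZMod 2) ⟨u, hu⟩))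
    rw [contractLeft_map_ker_aux, hw, one_smul, mul_zero, sub_zero] at h
    rw [hu', ← map_mul]
    exact h.symm.trans hz
  rw [add_mul, mul_assoc, hb, mul_zero, add_zero]
  rfl
end
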